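/- arXiv:1710.01599 — 2 statements merged into one kernel-verified Lean document; each statement's English description precedes it below -/
import Mathlib

section
/- Let A₁, A₂, B₁, B₂, C be unital C*-algebras, Φ : A₁ → A₂ and Ψ : B₁ → B₂ unital completely positive maps, and Λ : A₂ ⊗_alg B₂ → C a Schwarz channel. Then Λ ∘ (Φ ⊗ Ψ) : A₁ ⊗_alg B₁ → C is a Schwarz channel. -/
lemma aux_parts {E : Type*} [NonUnitalCStarAlgebra E] [PartialOrder E] [StarOrderedRing E]
    (X : E) (hX : IsSelfAdjoint X) :
    ∃ P N : E, 0 ≤ P ∧ 0 ≤ N ∧ P - N = X ∧ N * P = 0 :=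
  ⟨X⁺, X⁻, CFC.posPart_nonneg X, CFC.negPart_nonneg X, CFC.posPart_sub_negPart X hX,
    CFC.negPart_mul_posPart X⟩

lemma aux_sq {E : Type*} [NonUnitalCStarAlgebra E] [PartialOrder E] [StarOrderedRing E]
    (X : E) (hX : 0 ≤ X) : ∃ V : E, X = star V * V :=
  CStarAlgebra.nonneg_iff_eq_star_mul_self.mp hX

lemma aux_factor {A : Type*} [CStarAlgebra A] [PartialOrder A] [StarOrderedRing A] (n : ℕ)
    (M : Fin n → Fin n → A) (hM : ∀ i j, star (M i j) = M j i)
    (hpos : ∀ b : Fin n → A, 0 ≤ ∑ i, ∑ j, star (b i) * M i j * b j) :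
    ∃ R : Fin n → Fin n → A, ∀ i j, M i j = ∑ k, star (R k i) * R k j := by
  let X : CStarMatrix (Fin n) (Fin n) A := CStarMatrix.ofMatrix (Matrix.of M)
  have hX : IsSelfAdjoint X := by
    ext i j
    exact hM j i
  obtain ⟨P, N, hP0, hN0, hPN, hNP⟩ := aux_parts X hX
  have hNs : IsSelfAdjoint N := .of_nonneg hN0
  have h1 : star N * X * N = -(N * N * N) := by
    rw [hNs.star_eq]
    conv_lhs => rw [← hPN]
    rw [mul_sub, sub_mul, hNP, zero_mul, zero_sub]
  have h2 : 0 ≤ N * N * N := by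
    have := star_left_conjugate_nonneg hN0 N
    rwa [hNs.star_eq] at this
  obtain ⟨V, hV⟩ := aux_sq _ h2
  have h3 : ∀ j, ∑ k, star (V k j) * V k j ≤ 0 := by
    intro j
    have e1 : (N * N * N) j j = ∑ k, star (V k j) * V k j := by
      rw [hV]; rfl
    have e2 : (star N * X * N) j j = ∑ i, ∑ k, star (N i j) * M i k * N k j := by
      rw [Finset.sum_comm, CStarMatrix.mul_apply]
      refine Finset.sum_congr rfl fun k _ => ?_
      rw [CStarMatrix.mul_apply, Finset.sum_mul]
      rfl
    have e3 := hpos (fun i => N i j)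
    rw [← e2, h1, CStarMatrix.neg_apply, e1] at e3
    exact neg_nonneg.mp e3
  have h4 : V = 0 := by
    ext k j
    have h5 : ∀ k ∈ Finset.univ, 0 ≤ star (V k j) * V k j := fun k _ => star_mul_self_nonneg _
    have h6 := (Finset.sum_eq_zero_iff_of_nonneg h5).mp
      (le_antisymm (h3 j) (Finset.sum_nonneg h5)) k (Finset.mem_univ _)
    exact CStarRing.star_mul_self_eq_zero_iff _ |>.mp h6
  have h7 : N = 0 := by
    rw [h4, mul_zero] at hV
    have h8 : star (N * N) * (N * N) = 0 := by
      rw [star_mul, hNs.star_eq, ← mul_assoc, hV, zero_mul]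
    have h9 := (CStarRing.star_mul_self_eq_zero_iff _).mp h8
    have : star N * N = 0 := by rwa [hNs.star_eq]
    exact (CStarRing.star_mul_self_eq_zero_iff _).mp this
  have h10 : 0 ≤ X := by
    rw [← hPN, h7, sub_zero]
    exact hP0
  obtain ⟨R, hR⟩ := aux_sq _ h10
  refine ⟨fun i j => R i j, fun i j => ?_⟩
  change X i j = _
  rw [hR]; rfl

lemma aux_star {A B : Type*} [CStarAlgebra A] [CStarAlgebra B] [PartialOrder B] [StarOrderedRing B]
    (Φ : A →ₗ[ℂ] B) (h1 : Φ 1 = 1)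
    (hcp : ∀ (n : ℕ) (a : Fin n → A) (b : Fin n → B),
      0 ≤ ∑ i, ∑ j, star (b i) * Φ (star (a i) * a j) * b j) (x : A) :
    Φ (star x) = star (Φ x) := by
  have hp : star (Φ (star x * x)) = Φ (star x * x) := by
    have := (IsSelfAdjoint.of_nonneg (hcp 1 ![x] ![1])).star_eq
    simpa using this
  have k1 := (IsSelfAdjoint.of_nonneg (hcp 2 ![1, x] ![1, 1])).star_eq
  have k2 := (IsSelfAdjoint.of_nonneg
    (hcp 2 ![1, x] ![1, algebraMap ℂ B Complex.I])).star_eq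
  simp [Fin.sum_univ_two, h1, hp, Algebra.algebraMap_eq_smul_one] at k1 k2
  generalize star (Φ x) = u' at *
  generalize star (Φ (star x)) = v' at *
  have k3 : Complex.I • (v' - u' - (Φ x - Φ (star x))) = 0 := by
    rw [← sub_eq_zero] at k2
    rw [← k2]
    simp only [smul_sub]
    abel
  have k4 := (smul_eq_zero.mp k3).resolve_left Complex.I_ne_zero
  have k5 : (2 : ℂ) • (Φ (star x) - u') = 0 := by
    rw [← sub_eq_zero] at k1
    rw [← sub_zero (0 : B)]
    nth_rewrite 1 [← k4]
    rw [← k1, two_smul]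
    abel
  exact sub_eq_zero.mp ((smul_eq_zero.mp k5).resolve_left two_ne_zero)

lemma aux_fac2 {A B : Type*} [CStarAlgebra A] [CStarAlgebra B] [PartialOrder B] [StarOrderedRing B]
    (Φ : A →ₗ[ℂ] B) (h1 : Φ 1 = 1)
    (hcp : ∀ (n : ℕ) (a : Fin n → A) (b : Fin n → B),
      0 ≤ ∑ i, ∑ j, star (b i) * Φ (star (a i) * a j) * b j) (n : ℕ) (a : Fin n → A) :
    ∃ R : Fin n → Fin n → B, ∀ i j, Φ (star (a i) * a j) - star (Φ (a i)) * Φ (a j) =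
      ∑ k, star (R k i) * R k j := by
  have hs := aux_star Φ h1 hcp
  apply aux_factor
  · intro i j
    rw [star_sub, ← hs]
    simp
  · intro b
    have key := hcp (n+1) (Fin.cons 1 a) (Fin.cons (-∑ j, Φ (a j) * b j) b)
    simp only [Fin.sum_univ_succ, Fin.cons_zero, Fin.cons_succ, star_one, one_mul, mul_one, h1,
      hs] at key
    convert key using 1
    set c := ∑ j, Φ (a j) * b j with hc
    have e1 : ∑ j, star (-c) * Φ (a j) * b j = - (star c * c) := by
      simp only [mul_assoc]
      rw [← Finset.mul_sum, ← hc, star_neg, neg_mul]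
    have e2 : ∑ i, star (b i) * star (Φ (a i)) * (-c) = - (star c * c) := by
      rw [← Finset.sum_mul, mul_neg, hc, star_sum]
      simp only [star_mul]
    have e3 : ∑ i, ∑ j, star (b i) * (star (Φ (a i)) * Φ (a j)) * b j = star c * c := by
      rw [hc, star_sum, Finset.sum_mul_sum]
      simp only [star_mul, mul_assoc]
    simp only [mul_sub, sub_mul, Finset.sum_sub_distrib, Finset.sum_add_distrib, e1, e2, e3]
    simp only [star_neg, neg_mul, mul_neg]
    abel

lemma aux_schur {A B D : Type*} [CStarAlgebra A] [CStarAlgebra B] [Ring D] [StarRing D]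
    [Algebra ℂ D] (t : A →ₗ[ℂ] B →ₗ[ℂ] D)
    (hmul : ∀ (a c : A) (b d : B), t a b * t c d = t (a * c) (b * d))
    (hstar : ∀ (a : A) (b : B), star (t a b) = t (star a) (star b))
    {m l n : ℕ} (R : Fin m → Fin n → A) (S : Fin l → Fin n → B) :
    ∑ i, ∑ j, t (∑ k, star (R k i) * R k j) (∑ k, star (S k i) * S k j) =
      ∑ p, ∑ q, star (∑ i, t (R p i) (S q i)) * ∑ i, t (R p i) (S q i) := by
  simp only [star_sum, Finset.sum_mul_sum, hstar, hmul, map_sum, LinearMap.sum_apply]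
  calc _ = ∑ i, ∑ p, ∑ q, ∑ j, t (star (R p i) * R p j) (star (S q i) * S q j) := by
        refine Finset.sum_congr rfl fun i _ => ?_
        rw [Finset.sum_congr rfl fun j _ => Finset.sum_comm, Finset.sum_comm]
        refine Finset.sum_congr rfl fun p _ => ?_
        rw [Finset.sum_comm]
    _ = _ := by
        rw [Finset.sum_comm]
        refine Finset.sum_congr rfl fun p _ => ?_
        rw [Finset.sum_comm]

lemma aux_repr {A B D : Type*} [CStarAlgebra A] [CStarAlgebra B] [Ring D]
    [Algebra ℂ D] (t : A →ₗ[ℂ] B →ₗ[ℂ] D)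
    (hspan : Submodule.span ℂ {x : D | ∃ a b, x = t a b} = ⊤) (x : D) :
    ∃ (n : ℕ) (a : Fin n → A) (b : Fin n → B), x = ∑ i, t (a i) (b i) := by
  have hx : x ∈ Submodule.span ℂ {x : D | ∃ a b, x = t a b} := hspan ▸ Submodule.mem_top
  induction hx using Submodule.span_induction with
  | mem x h =>
    obtain ⟨a, b, rfl⟩ := h
    exact ⟨1, fun _ => a, fun _ => b, by simp⟩
  | zero => exact ⟨0, fun _ => 0, fun _ => 0, by simp⟩
  | add x y _ _ hx hy =>
    obtain ⟨n, a, b, rfl⟩ := hx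
    obtain ⟨m, c, d, rfl⟩ := hy
    exact ⟨n + m, Fin.append a c, Fin.append b d, by simp [Fin.sum_univ_add]⟩
  | smul r x _ hx =>
    obtain ⟨n, a, b, rfl⟩ := hx
    exact ⟨n, fun i => r • a i, b, by simp [Finset.smul_sum]⟩


/-- Let `D₁ = A₁ ⊗_alg B₁` and `D₂ = A₂ ⊗_alg B₂` be the algebraic
tensor products of unital C*-algebras, presented as unital *-algebras together with
bilinear tensor maps `t₁`, `t₂` satisfying the defining relations (simple tensors span,
`1 ⊗ 1 = 1`, `(a ⊗ b)(c ⊗ d) = ac ⊗ bd`, `(a ⊗ b)* = a* ⊗ b*`).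
If `Φ : A₁ → A₂` and `Ψ : B₁ → B₂` are unital completely positive maps, `T = Φ ⊗ Ψ`,
and `Λ : D₂ → C` is a Schwarz channel, then `Λ ∘ (Φ ⊗ Ψ)` is a Schwarz channel. -/
theorem comp_schwarz_with_ucp_tensor_ucp_is_schwarz
    {A₁ A₂ B₁ B₂ C D₁ D₂ : Type*}
    [CStarAlgebra A₁] [CStarAlgebra A₂] [PartialOrder A₂] [StarOrderedRing A₂] [CStarAlgebra B₁] [CStarAlgebra B₂] [PartialOrder B₂] [StarOrderedRing B₂] [CStarAlgebra C]
    [PartialOrder C] [StarOrderedRing C]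
    [Ring D₁] [StarRing D₁] [Algebra ℂ D₁] [StarModule ℂ D₁]
    [Ring D₂] [StarRing D₂] [Algebra ℂ D₂] [StarModule ℂ D₂]
    (t₁ : A₁ →ₗ[ℂ] B₁ →ₗ[ℂ] D₁)
    (ht₁span : Submodule.span ℂ {x : D₁ | ∃ a b, x = t₁ a b} = ⊤)
    (ht₁one : t₁ 1 1 = 1)
    (ht₁mul : ∀ (a c : A₁) (b d : B₁), t₁ a b * t₁ c d = t₁ (a * c) (b * d))
    (ht₁star : ∀ (a : A₁) (b : B₁), star (t₁ a b) = t₁ (star a) (star b))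
    (t₂ : A₂ →ₗ[ℂ] B₂ →ₗ[ℂ] D₂)
    (ht₂span : Submodule.span ℂ {x : D₂ | ∃ a b, x = t₂ a b} = ⊤)
    (ht₂one : t₂ 1 1 = 1)
    (ht₂mul : ∀ (a c : A₂) (b d : B₂), t₂ a b * t₂ c d = t₂ (a * c) (b * d))
    (ht₂star : ∀ (a : A₂) (b : B₂), star (t₂ a b) = t₂ (star a) (star b))
    (Φ : A₁ →ₗ[ℂ] A₂) (hΦ1 : Φ 1 = 1)
    (hΦcp : ∀ (n : ℕ) (a : Fin n → A₁) (b : Fin n → A₂),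
      0 ≤ ∑ i, ∑ j, star (b i) * Φ (star (a i) * a j) * b j)
    (Ψ : B₁ →ₗ[ℂ] B₂) (hΨ1 : Ψ 1 = 1)
    (hΨcp : ∀ (n : ℕ) (a : Fin n → B₁) (b : Fin n → B₂),
      0 ≤ ∑ i, ∑ j, star (b i) * Ψ (star (a i) * a j) * b j)
    (T : D₁ →ₗ[ℂ] D₂) (hT : ∀ (a : A₁) (b : B₁), T (t₁ a b) = t₂ (Φ a) (Ψ b))
    (Λ : D₂ →ₗ[ℂ] C) (hΛ1 : Λ 1 = 1)
    (hΛstar : ∀ x : D₂, Λ (star x) = star (Λ x))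
    (hΛsch : ∀ x : D₂, star (Λ x) * Λ x ≤ Λ (star x * x)) :
    (Λ ∘ₗ T) 1 = 1 ∧ (∀ x : D₁, (Λ ∘ₗ T) (star x) = star ((Λ ∘ₗ T) x)) ∧
      ∀ x : D₁, star ((Λ ∘ₗ T) x) * (Λ ∘ₗ T) x ≤ (Λ ∘ₗ T) (star x * x) := by
  have hΦs := aux_star Φ hΦ1 hΦcp
  have hΨs := aux_star Ψ hΨ1 hΨcp
  refine ⟨?_, ?_, ?_⟩
  · simp [← ht₁one, hT, hΦ1, hΨ1, ht₂one, hΛ1]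
  · intro x
    obtain ⟨n, a, b, rfl⟩ := aux_repr t₁ ht₁span x
    rw [LinearMap.comp_apply, LinearMap.comp_apply, ← hΛstar]
    simp only [star_sum, map_sum, ht₁star, hT, ht₂star, hΦs, hΨs]
  · intro x
    obtain ⟨n, a, b, rfl⟩ := aux_repr t₁ ht₁span x
    rw [LinearMap.comp_apply, LinearMap.comp_apply]
    refine (hΛsch _).trans ?_
    obtain ⟨R, hR⟩ := aux_fac2 Φ hΦ1 hΦcp n a
    obtain ⟨S, hS⟩ := aux_fac2 Ψ hΨ1 hΨcp n b
    obtain ⟨S', hS'⟩ := aux_factor n (fun i j => Ψ (star (b i) * b j))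
      (fun i j => by simp [← hΨs]) (fun c => hΨcp n b c)
    have hpos : ∀ y : D₂, 0 ≤ Λ (star y * y) := fun y =>
      (star_mul_self_nonneg _).trans (hΛsch y)
    have s1 := aux_schur t₂ ht₂mul ht₂star R S'
    have s2 := aux_schur t₂ ht₂mul ht₂star (fun (_ : Fin 1) i => Φ (a i)) S
    simp only [← hR, ← hS, ← hS', Finset.univ_unique, Finset.sum_singleton] at s1 s2
    have e : T (star (∑ i, t₁ (a i) (b i)) * ∑ i, t₁ (a i) (b i)) -
        star (T (∑ i, t₁ (a i) (b i))) * T (∑ i, t₁ (a i) (b i)) =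
        ∑ i, ∑ j, t₂ (Φ (star (a i) * a j) - star (Φ (a i)) * Φ (a j)) (Ψ (star (b i) * b j)) +
        ∑ i, ∑ j, t₂ (star (Φ (a i)) * Φ (a j))
          (Ψ (star (b i) * b j) - star (Ψ (b i)) * Ψ (b j)) := by
      simp only [star_sum, map_sum, Finset.sum_mul_sum, ht₁star, ht₁mul, hT, ht₂star, ht₂mul,
        map_sub, LinearMap.sub_apply, Finset.sum_sub_distrib]
      abel
    rw [← sub_nonneg, ← map_sub, e, s1, s2, map_add]
    simp only [map_sum Λ]
    refine add_nonneg ?_ ?_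
    · exact Finset.sum_nonneg fun _ _ => Finset.sum_nonneg fun _ _ => hpos _
    · exact Finset.sum_nonneg fun _ _ => hpos _
end

section
/- Let A be a unital C*-algebra, B a unital C*-subalgebra of A, and E : A → B a conditional expectation, i.e., a linear map with E(b) = b for all b ∈ B and ‖E(a)‖ ≤ ‖a‖ for all a ∈ A. Then (Tomiyama) E satisfies the bimodule property E(b₁ a b₂) = b₁ E(a) b₂ for all a ∈ A and b₁, b₂ ∈ B, and E is completely positive. -/
theorem tom_local
    {A : Type*} [CStarAlgebra A] [PartialOrder A] [StarOrderedRing A]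
    (B : StarSubalgebra ℂ A)
    (E : A →ₗ[ℂ] A) (hrange : ∀ a : A, E a ∈ B) (hfix : ∀ b ∈ B, E b = b)
    (hcontr : ∀ a : A, ‖E a‖ ≤ ‖a‖) (r z : A) (hrB : r ∈ B) (hr0 : 0 ≤ r) (hr1 : ‖r‖ ≤ 1)
    (hrz : r * z = 0) : r * E z = 0 := by
  set y := E z with hy
  have hrs : star r = r := (IsSelfAdjoint.of_nonneg hr0).star_eq
  have hzr : star z * r = 0 := by
    have := congrArg star hrz
    simpa [hrs] using this
  have hrr : r * r ≤ r := by
    have h1 : r ≤ 1 := (CStarAlgebra.norm_le_one_iff_of_nonneg r hr0).1 hr1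
    have hc : 0 ≤ r * (1 - r) := (Commute.mul_nonneg hr0 (sub_nonneg.2 h1)
      ((Commute.one_right r).sub_right (Commute.refl r)))
    rw [mul_sub, mul_one] at hc
    exact sub_nonneg.1 hc
  have key : ∀ t : ℝ, 0 ≤ t → 2 * t * ‖r * y‖ ^ 2 ≤ ‖z‖ ^ 2 := by
    intro t ht
    have hm : r * y ∈ B := mul_mem hrB (hrange z)
    have hE : E (z + (t : ℂ) • (r * y)) = y + t • (r * y) := by
      rw [map_add, hfix _ (B.smul_mem hm _), Complex.coe_smul]
    have h1 : ‖y + t • (r * y)‖ ≤ ‖z + t • (r * y)‖ := by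
      rw [← hE]
      simpa using hcontr (z + (t : ℂ) • (r * y))
    have h2 : ‖z + t • (r * y)‖ ^ 2 ≤ ‖z‖ ^ 2 + t ^ 2 * ‖r * y‖ ^ 2 := by
      rw [sq, ← CStarRing.norm_star_mul_self]
      have : star (z + t • (r * y)) * (z + t • (r * y))
          = star z * z + t ^ 2 • (star (r * y) * (r * y)) := by
        have e1 : star z * (r * y) = 0 := by rw [← mul_assoc, hzr, zero_mul]
        have e2 : star (r * y) * z = 0 := by rw [star_mul, hrs, mul_assoc, hrz, mul_zero]
        simp only [star_add, star_smul, star_trivial, add_mul, mul_add, smul_mul_assoc,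
          mul_smul_comm, e1, e2, smul_zero, add_zero, zero_add, smul_smul, sq]
      rw [this]
      refine (norm_add_le _ _).trans ?_
      rw [norm_smul, CStarRing.norm_star_mul_self, CStarRing.norm_star_mul_self]
      simp [sq]
    have h3 : (t ^ 2 + 2 * t) * ‖r * y‖ ^ 2 ≤ ‖y + t • (r * y)‖ ^ 2 := by
      rw [sq ‖y + _‖, ← CStarRing.norm_star_mul_self]
      have hn : ‖(t ^ 2 + 2 * t) • (star (r * y) * (r * y))‖ = (t ^ 2 + 2 * t) * ‖r * y‖ ^ 2 := by
        rw [norm_smul, CStarRing.norm_star_mul_self, Real.norm_of_nonneg (by positivity), sq ‖_‖]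
      rw [← hn]
      have hp : 0 ≤ t ^ 2 + 2 * t := by positivity
      refine CStarAlgebra.norm_le_norm_of_nonneg_of_le
        (smul_nonneg hp (star_mul_self_nonneg _)) ?_
      have hd : star (y + t • (r * y)) * (y + t • (r * y))
          - (t ^ 2 + 2 * t) • (star (r * y) * (r * y))
          = star y * y + (2 * t) • (star y * (r - r * r) * y) := by
        simp only [star_add, star_smul, star_trivial, add_mul, mul_add, smul_mul_assoc,
          mul_smul_comm, star_mul, hrs, mul_sub, sub_mul, mul_assoc]
        module
      rw [← sub_nonneg, hd]
      exact add_nonneg (star_mul_self_nonneg _) (smul_nonneg (by positivity)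
        (star_left_conjugate_nonneg (sub_nonneg.2 hrr) y))
    have h4 : ‖y + t • (r * y)‖ ^ 2 ≤ ‖z + t • (r * y)‖ ^ 2 := by gcongr
    nlinarith
  by_contra hne
  have hpos : 0 < ‖r * y‖ ^ 2 := by positivity
  have := key ((‖z‖ ^ 2 + 1) / ‖r * y‖ ^ 2) (by positivity)
  have h5 : 2 * ((‖z‖ ^ 2 + 1) / ‖r * y‖ ^ 2) * ‖r * y‖ ^ 2 = 2 * (‖z‖ ^ 2 + 1) := by
    field_simp
  rw [h5] at this
  nlinarith [sq_nonneg ‖z‖]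

theorem tom_band
    {A : Type*} [CStarAlgebra A] [PartialOrder A] [StarOrderedRing A]
    (B : StarSubalgebra ℂ A) (hBclosed : IsClosed (B : Set A))
    (E : A →ₗ[ℂ] A) (hrange : ∀ a : A, E a ∈ B) (hfix : ∀ b ∈ B, E b = b)
    (hcontr : ∀ a : A, ‖E a‖ ≤ ‖a‖) (b a : A) (hb : b ∈ B) (hbs : IsSelfAdjoint b)
    (p ε : ℝ) (hε : 0 < ε) :
    ‖cfc (fun x : ℝ => max 0 (1 - |x - p| / (2 * ε))) b * (E (b * a) - b * E a)‖
      ≤ 4 * ε * ‖a‖ := by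
  have := hBclosed
  set r := cfc (fun x : ℝ => max 0 (1 - |x - p| / (2 * ε))) b with hr
  set c := cfc (fun x : ℝ => max (-(2 * ε)) (min (2 * ε) (x - p))) b with hc
  have hrB : r ∈ B := cfc_mem (𝕜' := ℂ) _ hb
  have hr0 : 0 ≤ r := cfc_nonneg (by intros; positivity)
  have hr1 : ‖r‖ ≤ 1 := by
    refine norm_cfc_le zero_le_one fun x _ => ?_
    rw [Real.norm_of_nonneg (by positivity)]
    refine max_le zero_le_one ?_
    have : 0 ≤ |x - p| / (2 * ε) := by positivity
    linarith
  have hcn : ‖c‖ ≤ 2 * ε := by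
    refine norm_cfc_le (by positivity) fun x _ => ?_
    rw [Real.norm_eq_abs, abs_le]
    exact ⟨le_max_left _ _, max_le (by linarith) (min_le_left _ _)⟩
  have hrc : r * (b - algebraMap ℝ A p - c) = 0 := by
    have e : b - algebraMap ℝ A p - c
        = cfc (fun x : ℝ => x - p - max (-(2 * ε)) (min (2 * ε) (x - p))) b := by
      rw [cfc_sub (fun x : ℝ => x - p) _ b, cfc_sub (fun x : ℝ => x) (fun _ => p) b,
        cfc_id' ℝ b, cfc_const p b]
    rw [e, hr, ← cfc_mul _ _ b, ← cfc_zero ℝ b]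
    refine cfc_congr fun x _ => ?_
    simp only [Pi.zero_apply, mul_eq_zero]
    by_cases h : |x - p| ≤ 2 * ε
    · right
      rw [abs_le] at h
      rw [min_eq_right h.2, max_eq_right h.1, sub_self]
    · left
      apply max_eq_left
      rw [sub_nonpos, le_div_iff₀ (by positivity)]
      linarith
  have hloc := tom_local B E hrange hfix hcontr r ((b - algebraMap ℝ A p - c) * a) hrB hr0 hr1
    (by rw [← mul_assoc, hrc, zero_mul])
  have hpE : E (algebraMap ℝ A p * a) = algebraMap ℝ A p * E a := by
    simp only [← Algebra.smul_def]
    exact E.map_smul_of_tower p a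
  have h2 : r * ((b - algebraMap ℝ A p - c) * E a) = 0 := by rw [← mul_assoc, hrc, zero_mul]
  have hfin : r * (E (b * a) - b * E a) = r * (E (c * a) - c * E a) := by
    simp only [sub_mul, map_sub, hpE, mul_sub] at hloc h2 ⊢
    rw [← sub_eq_zero]
    have h6 := congrArg₂ (· - ·) hloc h2
    simp only [sub_zero] at h6
    rw [← h6]
    abel
  rw [hfin]
  calc _ ≤ ‖r‖ * ‖E (c * a) - c * E a‖ := norm_mul_le _ _
    _ ≤ 1 * (‖c‖ * ‖a‖ + ‖c‖ * ‖a‖) := by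
      gcongr
      refine (norm_sub_le _ _).trans (add_le_add ((hcontr _).trans (norm_mul_le _ _))
        ((norm_mul_le _ _).trans ?_))
      gcongr
      exact hcontr a
    _ ≤ 1 * ((2 * ε) * ‖a‖ + (2 * ε) * ‖a‖) := by gcongr
    _ = _ := by ring

theorem tom_left_sa
    {A : Type*} [CStarAlgebra A] [PartialOrder A] [StarOrderedRing A]
    (B : StarSubalgebra ℂ A) (hBclosed : IsClosed (B : Set A))
    (E : A →ₗ[ℂ] A) (hrange : ∀ a : A, E a ∈ B) (hfix : ∀ b ∈ B, E b = b)
    (hcontr : ∀ a : A, ‖E a‖ ≤ ‖a‖) (b a : A) (hb : b ∈ B) (hbs : IsSelfAdjoint b) :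
    E (b * a) = b * E a := by
  nontriviality A
  set d := E (b * a) - b * E a with hd
  set M := ‖b‖ + 1 with hM
  have hMpos : 0 < M := by positivity
  have key : ∀ n : ℕ, 0 < n → ‖d‖ ^ 2 ≤ 192 * M ^ 2 * ‖a‖ ^ 2 / n := by
    intro n hn
    have hn' : (0 : ℝ) < n := by exact_mod_cast hn
    have hn1 : (1 : ℝ) ≤ n := by exact_mod_cast hn
    set ε := M / n with hε
    have hεpos : 0 < ε := by positivity
    let f : ℕ → ℝ → ℝ := fun k x => max 0 (1 - |x - (-M + k * ε)| / (2 * ε))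
    let r : ℕ → A := fun k => cfc (f k) b
    have hfc : ∀ k, Continuous (f k) := by
      intro k
      fun_prop
    have hrs : ∀ k, star (r k) = r k := fun k => (cfc_predicate (f k) b : IsSelfAdjoint _).star_eq
    have hone : (1 : A) ≤ (4 : ℝ) • ∑ k ∈ Finset.range (2 * n + 1), r k * r k := by
      have e : (4 : ℝ) • ∑ k ∈ Finset.range (2 * n + 1), r k * r k
          = cfc (fun x => (4 : ℝ) • ∑ k ∈ Finset.range (2 * n + 1), f k x * f k x) b := by
        have hcont : ∀ k, Continuous fun x => f k x * f k x := fun k => (hfc k).mul (hfc k)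
        rw [cfc_smul (4 : ℝ) (fun x => ∑ k ∈ Finset.range (2 * n + 1), f k x * f k x) b
          (by apply Continuous.continuousOn; fun_prop)]
        congr 1
        have hsum := cfc_sum (fun k x => f k x * f k x) b (Finset.range (2 * n + 1))
          (fun k _ => (hcont k).continuousOn)
        have hfun : (fun x => ∑ k ∈ Finset.range (2 * n + 1), f k x * f k x)
            = ∑ k ∈ Finset.range (2 * n + 1), fun x => f k x * f k x := by
          ext x; simp
        rw [hfun, hsum]
        refine Finset.sum_congr rfl fun k _ => ?_
        exact (cfc_mul (f k) (f k) b (hfc k).continuousOn (hfc k).continuousOn).symm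
      rw [e, ← cfc_one ℝ b]
      refine cfc_mono (fun x hx => ?_) (by fun_prop) (by apply Continuous.continuousOn; fun_prop)
      have hxM : |x| ≤ ‖b‖ := by simpa using spectrum.norm_le_norm_of_mem hx
      rw [abs_le] at hxM
      have hx0 : 0 ≤ (x + M) / ε := div_nonneg (by linarith) hεpos.le
      set k := ⌊(x + M) / ε⌋₊ with hk
      have hk1 : (k : ℝ) * ε ≤ x + M := by
        rw [← le_div_iff₀ hεpos]; exact Nat.floor_le hx0
      have hk2 : x + M < (k + 1 : ℝ) * ε := by
        rw [← div_lt_iff₀ hεpos]; exact Nat.lt_floor_add_one _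
      have hkn : k < 2 * n + 1 := by
        have hne : (n : ℝ) * ε = M := by rw [hε]; field_simp
        have : (k : ℝ) * ε < (2 * n + 1) * ε := by nlinarith
        have := lt_of_mul_lt_mul_right this hεpos.le
        exact_mod_cast this
      have hfk : 1 / 2 ≤ f k x := by
        refine le_max_of_le_right ?_
        have : |x - (-M + k * ε)| ≤ ε := by rw [abs_le]; constructor <;> nlinarith
        have : |x - (-M + k * ε)| / (2 * ε) ≤ 1 / 2 := by
          rw [div_le_iff₀ (by positivity)]; linarith
        linarith
      have hle : f k x * f k x ≤ ∑ k ∈ Finset.range (2 * n + 1), f k x * f k x :=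
        Finset.single_le_sum (f := fun k => f k x * f k x) (fun i _ => mul_self_nonneg _)
          (Finset.mem_range.2 hkn)
      simp only [Pi.one_apply, smul_eq_mul]
      nlinarith
    have hdd : star d * d ≤ (4 : ℝ) • ∑ k ∈ Finset.range (2 * n + 1), star (r k * d) * (r k * d) := by
      have := star_left_conjugate_le_conjugate hone d
      simpa [mul_assoc, Finset.mul_sum, Finset.sum_mul, hrs, mul_smul_comm, smul_mul_assoc] using this
    have hnorm := CStarAlgebra.norm_le_norm_of_nonneg_of_le (star_mul_self_nonneg d) hdd
    rw [CStarRing.norm_star_mul_self, ← sq] at hnorm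
    calc ‖d‖ ^ 2 ≤ _ := hnorm
      _ ≤ 4 * ∑ k ∈ Finset.range (2 * n + 1), (4 * ε * ‖a‖) ^ 2 := by
        rw [norm_smul, Real.norm_of_nonneg (by norm_num)]
        gcongr
        refine norm_sum_le_of_le _ fun k _ => ?_
        rw [CStarRing.norm_star_mul_self, ← sq]
        gcongr
        exact tom_band B hBclosed E hrange hfix hcontr b a hb hbs _ ε hεpos
      _ = 4 * (2 * n + 1) * (16 * ε ^ 2 * ‖a‖ ^ 2) := by
        simp; ring
      _ ≤ 4 * (3 * n) * (16 * ε ^ 2 * ‖a‖ ^ 2) := by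
        gcongr; linarith
      _ = _ := by rw [hε]; field_simp; ring
  have hlim : ‖d‖ ^ 2 ≤ 0 := by
    refine ge_of_tendsto (tendsto_const_div_atTop_nhds_zero_nat (192 * M ^ 2 * ‖a‖ ^ 2)) ?_
    filter_upwards [Filter.eventually_gt_atTop 0] with n hn using key n hn
  have : ‖d‖ = 0 := by
    have := sq_nonneg ‖d‖
    exact pow_eq_zero_iff (two_ne_zero) |>.1 (le_antisymm hlim this)
  exact sub_eq_zero.1 (norm_eq_zero.1 this)

theorem tom_left
    {A : Type*} [CStarAlgebra A] [PartialOrder A] [StarOrderedRing A]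
    (B : StarSubalgebra ℂ A) (hBclosed : IsClosed (B : Set A))
    (E : A →ₗ[ℂ] A) (hrange : ∀ a : A, E a ∈ B) (hfix : ∀ b ∈ B, E b = b)
    (hcontr : ∀ a : A, ‖E a‖ ≤ ‖a‖) (b a : A) (hb : b ∈ B) :
    E (b * a) = b * E a := by
  have hre : (realPart b : A) ∈ B := by
    rw [realPart_apply_coe, ← Complex.coe_smul]
    exact B.smul_mem (add_mem hb (star_mem hb)) _
  have him : (imaginaryPart b : A) ∈ B := by
    rw [imaginaryPart_apply_coe, ← Complex.coe_smul]
    exact B.smul_mem (B.smul_mem (sub_mem hb (star_mem hb)) _) _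
  have h1 := tom_left_sa B hBclosed E hrange hfix hcontr _ a hre (realPart b).2
  have h2 := tom_left_sa B hBclosed E hrange hfix hcontr _ a him (imaginaryPart b).2
  conv_lhs => rw [← realPart_add_I_smul_imaginaryPart b]
  conv_rhs => rw [← realPart_add_I_smul_imaginaryPart b]
  simp only [add_mul, smul_mul_assoc, map_add, map_smul, h1, h2]

theorem tom_star
    {A : Type*} [CStarAlgebra A] [PartialOrder A] [StarOrderedRing A]
    (B : StarSubalgebra ℂ A)
    (E : A →ₗ[ℂ] A) (hfix : ∀ b ∈ B, E b = b)
    (hcontr : ∀ a : A, ‖E a‖ ≤ ‖a‖) (a : A) (ha : IsSelfAdjoint a) : IsSelfAdjoint (E a) := by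
  rcases subsingleton_or_nontrivial A with hsub | hnt
  · exact Subsingleton.elim _ _
  have hI : ∀ t : ℝ, E (algebraMap ℂ A (t * Complex.I)) = algebraMap ℂ A (t * Complex.I) :=
    fun t => hfix _ (B.algebraMap_mem _)
  set k : A := (imaginaryPart (E a) : A) with hk
  have hks : IsSelfAdjoint k := (imaginaryPart (E a)).2
  have hal : ∀ t : ℝ, IsSelfAdjoint (algebraMap ℝ A t) := fun t => IsSelfAdjoint.algebraMap A (.all _)
  have hw : ∀ t : ℝ, algebraMap ℂ A (t * Complex.I) = Complex.I • algebraMap ℝ A t := by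
    intro t
    rw [mul_comm, map_mul, ← Algebra.smul_def]
    rfl
  have key : ∀ t : ℝ, k * k + (2 * t) • k ≤ algebraMap ℝ A (‖a‖ ^ 2) := by
    intro t
    have h1 : ‖k + algebraMap ℝ A t‖ ≤ ‖E a + algebraMap ℂ A (t * Complex.I)‖ := by
      have : (imaginaryPart (E a + algebraMap ℂ A (t * Complex.I)) : A) = k + algebraMap ℝ A t := by
        rw [map_add, hw, imaginaryPart_I_smul, AddSubgroup.coe_add, (hal t).coe_realPart]
      rw [← this]
      exact imaginaryPart.norm_le (E a + algebraMap ℂ A (t * Complex.I))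
    have h2 : ‖E a + algebraMap ℂ A (t * Complex.I)‖ ≤ ‖a + algebraMap ℂ A (t * Complex.I)‖ := by
      have := hcontr (a + algebraMap ℂ A (t * Complex.I))
      rwa [map_add, hI] at this
    have h3 : ‖a + algebraMap ℂ A (t * Complex.I)‖ ^ 2 ≤ ‖a‖ ^ 2 + t ^ 2 := by
      rw [sq, ← CStarRing.norm_star_mul_self]
      have e : star (a + algebraMap ℂ A (t * Complex.I)) * (a + algebraMap ℂ A (t * Complex.I))
          = a * a + (t ^ 2) • (1 : A) := by
        rw [hw, star_add, star_smul, (hal t).star_eq, ha.star_eq, Algebra.algebraMap_eq_smul_one]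
        simp only [add_mul, mul_add, smul_mul_assoc, mul_smul_comm, mul_one, one_mul,
          Complex.star_def, Complex.conj_I, neg_smul, neg_mul, smul_add, smul_neg]
        have e2 : Complex.I • t • Complex.I • t • (1 : A) = -((t ^ 2) • (1 : A)) := by
          rw [smul_comm t Complex.I, smul_smul Complex.I, Complex.I_mul_I, smul_smul, neg_smul,
            one_smul, sq]
        rw [e2]
        abel
      rw [e]
      refine (norm_add_le _ _).trans (add_le_add ?_ ?_)
      · exact (norm_mul_le _ _).trans (sq _).symm.le
      · rw [norm_smul, Real.norm_of_nonneg (by positivity)]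
        refine mul_le_of_le_one_right (by positivity) ?_
        exact norm_one.le
    have h4 : (k + algebraMap ℝ A t) * (k + algebraMap ℝ A t) ≤ algebraMap ℝ A (‖a‖ ^ 2 + t ^ 2) := by
      have h5 := CStarAlgebra.star_mul_le_algebraMap_norm_sq (a := k + algebraMap ℝ A t)
      rw [(hks.add (hal t)).star_eq] at h5
      refine h5.trans (algebraMap_mono A ?_)
      exact (pow_le_pow_left₀ (norm_nonneg _) (h1.trans h2) 2).trans h3
    have h6 : (k + algebraMap ℝ A t) * (k + algebraMap ℝ A t)
        = k * k + (2 * t) • k + algebraMap ℝ A (t ^ 2) := by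
      simp only [Algebra.algebraMap_eq_smul_one, add_mul, mul_add, smul_mul_assoc, mul_smul_comm,
        mul_one, one_mul]
      module
    rw [h6, map_add] at h4
    exact le_of_add_le_add_right h4
  have key2 : ∀ t : ℝ, (2 * t) • k ≤ algebraMap ℝ A (‖a‖ ^ 2) := fun t =>
    (le_add_of_nonneg_left hks.mul_self_nonneg).trans (key t)
  have hspec : ∀ x ∈ spectrum ℝ k, x = 0 := by
    intro x hx
    have h7 : ∀ t : ℝ, 2 * t * x ≤ ‖a‖ ^ 2 := by
      intro t
      have h8 := key2 t
      rw [le_algebraMap_iff_spectrum_le (IsSelfAdjoint.smul (.all (2 * t)) hks)] at h8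
      refine h8 _ ?_
      have := spectrum.smul_eq_smul (2 * t) k ⟨x, hx⟩
      rw [this]
      exact Set.smul_mem_smul_set hx
    by_contra hne
    have := h7 ((‖a‖ ^ 2 + 1) / x)
    have h9 : 2 * ((‖a‖ ^ 2 + 1) / x) * x = 2 * (‖a‖ ^ 2 + 1) := by field_simp
    rw [h9] at this
    nlinarith [sq_nonneg ‖a‖]
  have hk0 : k = 0 := CFC.eq_zero_of_spectrum_subset_zero (R := ℝ) k (fun x hx => hspec x hx) hks
  have := realPart_add_I_smul_imaginaryPart (E a)
  rw [← hk, hk0, smul_zero, add_zero] at this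
  rw [← this]
  exact (realPart (E a)).2

theorem tom_pos
    {A : Type*} [CStarAlgebra A] [PartialOrder A] [StarOrderedRing A]
    (B : StarSubalgebra ℂ A)
    (E : A →ₗ[ℂ] A) (hfix : ∀ b ∈ B, E b = b)
    (hcontr : ∀ a : A, ‖E a‖ ≤ ‖a‖) (a : A) (ha : 0 ≤ a) : 0 ≤ E a := by
  have hs := tom_star B E hfix hcontr a (.of_nonneg ha)
  have h1 : ‖algebraMap ℝ A ‖a‖ - a‖ ≤ ‖a‖ := by
    rw [CStarAlgebra.norm_le_iff_le_algebraMap _ (norm_nonneg _)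
      (sub_nonneg.2 (IsSelfAdjoint.le_algebraMap_norm_self (.of_nonneg ha)))]
    simpa using ha
  have h2 : E (algebraMap ℝ A ‖a‖) = algebraMap ℝ A ‖a‖ := hfix _ (B.algebraMap_mem (‖a‖ : ℂ))
  have h3 := (hcontr _).trans h1
  rw [map_sub, h2] at h3
  have hsa : IsSelfAdjoint (algebraMap ℝ A ‖a‖ - E a) := (IsSelfAdjoint.algebraMap A (.all _)).sub hs
  have h4 := hsa.le_algebraMap_norm_self.trans (algebraMap_mono A h3)
  simpa using h4


theorem tom_neg {M : Type*} [CStarAlgebra M] (T : M) (hTs : star T = T) :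
    ∃ N R : M, star N = N ∧ N * T * N = -(star R * R) ∧ (R = 0 → ∃ S : M, T = star S * S) := by
  let _ := CStarAlgebra.spectralOrder M
  have _ := CStarAlgebra.spectralOrderedRing M
  have hN0 : 0 ≤ T⁻ := CFC.negPart_nonneg T
  set N := T⁻ with hN
  have hNs : IsSelfAdjoint N := .of_nonneg hN0
  have hNTN : N * T * N = - (N * N * N) := by
    conv_lhs => rw [← CFC.posPart_sub_negPart T hTs]
    rw [mul_sub, CFC.negPart_mul_posPart, zero_sub, neg_mul]
  have h3 : 0 ≤ N * N * N := hNs.conjugate_nonneg hN0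
  obtain ⟨R, hR⟩ := CStarAlgebra.nonneg_iff_eq_star_mul_self.1 h3
  refine ⟨N, R, hNs.star_eq, by rw [hNTN, hR], fun hR0 => ?_⟩
  have hN3 : N * N * N = 0 := by rw [hR, hR0, mul_zero]
  have hNN : N * N = 0 := by
    rw [← CStarRing.star_mul_self_eq_zero_iff, star_mul, hNs.star_eq, ← mul_assoc, hN3, zero_mul]
  have hNz : N = 0 := by
    rw [← CStarRing.star_mul_self_eq_zero_iff, hNs.star_eq, hNN]
  have hT0 : 0 ≤ T := (CFC.negPart_eq_zero_iff T hTs).1 hNz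
  exact CStarAlgebra.nonneg_iff_eq_star_mul_self.1 hT0

theorem tom_matrix {C : Type*} [CStarAlgebra C] [PartialOrder C] [StarOrderedRing C]
    {n : ℕ} (T : CStarMatrix (Fin n) (Fin n) C) (hTs : star T = T)
    (hT : ∀ y : Fin n → C, 0 ≤ ∑ i, ∑ j, star (y i) * T i j * y j) :
    ∃ S : CStarMatrix (Fin n) (Fin n) C, T = star S * S := by
  obtain ⟨N, R, hNs, hNTN, hfin⟩ :
    ∃ N R : CStarMatrix (Fin n) (Fin n) C, star N = N ∧ N * T * N = -(star R * R) ∧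
      (R = 0 → ∃ S : CStarMatrix (Fin n) (Fin n) C, T = star S * S) := tom_neg T hTs
  apply hfin
  ext k i
  have h4 : 0 ≤ (N * T * N) i i := by
    have := hT (fun j => N j i)
    convert this using 1
    simp only [CStarMatrix.mul_apply, Finset.sum_mul]
    rw [Finset.sum_comm]
    refine Finset.sum_congr rfl fun p _ => Finset.sum_congr rfl fun q _ => ?_
    rw [CStarMatrix.star_apply_of_isSelfAdjoint hNs]
  rw [hNTN] at h4
  have h5 : ∑ l, star (R l i) * R l i ≤ 0 := by
    simpa [CStarMatrix.mul_apply, CStarMatrix.star_apply] using h4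
  have h6 := (Finset.sum_eq_zero_iff_of_nonneg (fun l _ => star_mul_self_nonneg (R l i))).1
    (le_antisymm h5 (Finset.sum_nonneg fun l _ => star_mul_self_nonneg (R l i))) k
    (Finset.mem_univ k)
  simpa using h6

/-- **Tomiyama.** If `B` is a unital C*-subalgebra of a unital C*-algebra
`A` and `E : A → A` is a linear map onto `B` fixing `B` with `‖E a‖ ≤ ‖a‖`, then `E`
satisfies the bimodule property `E (b₁ a b₂) = b₁ (E a) b₂` for `b₁, b₂ ∈ B` and `E`
is completely positive. -/
theorem tomiyama_conditional_expectation
    {A : Type*} [CStarAlgebra A] [PartialOrder A] [StarOrderedRing A]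
    (B : StarSubalgebra ℂ A) (hBclosed : IsClosed (B : Set A))
    (E : A →ₗ[ℂ] A) (hrange : ∀ a : A, E a ∈ B) (hfix : ∀ b ∈ B, E b = b)
    (hcontr : ∀ a : A, ‖E a‖ ≤ ‖a‖) :
    (∀ a : A, ∀ b₁ ∈ B, ∀ b₂ ∈ B, E (b₁ * a * b₂) = b₁ * E a * b₂) ∧
      ∀ (n : ℕ) (x : Fin n → A) (y : Fin n → A),
        0 ≤ ∑ i, ∑ j, star (y i) * E (star (x i) * x j) * y j := by
  have hstar : ∀ a, E (star a) = star (E a) := by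
    intro a
    have h1 := tom_star B E hfix hcontr _ (realPart a).2
    have h2 := tom_star B E hfix hcontr _ (imaginaryPart a).2
    conv_lhs => rw [← realPart_add_I_smul_imaginaryPart a]
    conv_rhs => rw [← realPart_add_I_smul_imaginaryPart a]
    rw [star_add, star_smul, (realPart a).2.star_eq, (imaginaryPart a).2.star_eq, map_add, map_add,
      map_smul, map_smul, star_add, star_smul, h1.star_eq, h2.star_eq]
  have hleft := tom_left B hBclosed E hrange hfix hcontr
  have hbi : ∀ a : A, ∀ b₁ ∈ B, ∀ b₂ ∈ B, E (b₁ * a * b₂) = b₁ * E a * b₂ := by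
    intro a b₁ h₁ b₂ h₂
    have hright : ∀ a, E (a * b₂) = E a * b₂ := by
      intro a
      have := congrArg star (hleft (star b₂) (star a) (star_mem h₂))
      rw [← star_mul, hstar, hstar, star_mul, star_star, star_star, star_star] at this
      exact this
    rw [hright, hleft _ _ h₁]
  refine ⟨hbi, fun n x y => ?_⟩
  have := hBclosed
  let : PartialOrder B := CStarAlgebra.spectralOrder B
  have : StarOrderedRing B := CStarAlgebra.spectralOrderedRing B
  let T : CStarMatrix (Fin n) (Fin n) B :=
    CStarMatrix.ofMatrix (Matrix.of fun i j => (⟨E (star (x i) * x j), hrange _⟩ : B))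
  have hTc : ∀ i j, ((T i j : B) : A) = E (star (x i) * x j) := fun i j => rfl
  have hTs : star T = T := by
    ext i j
    rw [CStarMatrix.star_apply]
    change star (E (star (x j) * x i)) = E (star (x i) * x j)
    rw [← hstar, star_mul, star_star]
  obtain ⟨S, hS⟩ := tom_matrix T hTs (by
    intro z
    have hA : ((∑ i, ∑ j, star (z i) * T i j * z j : B) : A)
        = E (star (∑ i, x i * (z i : A)) * ∑ i, x i * (z i : A)) := by
      simp only [AddSubmonoidClass.coe_finsetSum, MulMemClass.coe_mul, hTc, star_sum,
        Finset.sum_mul_sum, map_sum, star_mul]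
      refine Finset.sum_congr rfl fun i _ => Finset.sum_congr rfl fun j _ => ?_
      have := hbi (star (x i) * x j) (star (z i : A)) (star_mem (z i).2) (z j) (z j).2
      rw [← mul_assoc, mul_assoc (star (z i : A)), this]
      rfl
    have hpos : 0 ≤ ((∑ i, ∑ j, star (z i) * T i j * z j : B) : A) := by
      rw [hA]
      exact tom_pos B E hfix hcontr _ (star_mul_self_nonneg _)
    generalize (∑ i, ∑ j, star (z i) * T i j * z j : B) = w at hpos
    have hs : CFC.sqrt (w : A) ∈ B := by
      rw [CFC.sqrt_eq_real_sqrt (w : A) hpos]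
      exact cfcₙ_mem (𝕜' := ℂ) _ w.2
    have hsa : IsSelfAdjoint (CFC.sqrt (w : A)) := .of_nonneg (CFC.sqrt_nonneg _)
    have : w = star (⟨_, hs⟩ : B) * ⟨_, hs⟩ := by
      apply Subtype.ext
      change (w : A) = star (CFC.sqrt (w : A)) * CFC.sqrt (w : A)
      rw [hsa.star_eq, CFC.sqrt_mul_sqrt_self _ hpos]
    rw [this]
    exact star_mul_self_nonneg _)
  have hSij : ∀ i j, E (star (x i) * x j) = ∑ k, star (S k i : A) * (S k j : A) := by
    intro i j
    rw [← hTc, hS, CStarMatrix.mul_apply]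
    simp [CStarMatrix.star_apply]
  have hfinal : ∑ i, ∑ j, star (y i) * E (star (x i) * x j) * y j
      = ∑ k, star (∑ i, (S k i : A) * y i) * ∑ i, (S k i : A) * y i := by
    simp only [hSij, star_sum, Finset.sum_mul_sum, star_mul]
    conv_rhs => rw [Finset.sum_comm]
    refine Finset.sum_congr rfl fun i _ => ?_
    conv_rhs => rw [Finset.sum_comm]
    refine Finset.sum_congr rfl fun j _ => ?_
    rw [Finset.mul_sum, Finset.sum_mul]
    refine Finset.sum_congr rfl fun k _ => ?_
    simp only [mul_assoc]
  rw [hfinal]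
  exact Finset.sum_nonneg fun k _ => star_mul_self_nonneg _
end
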